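/- (Max balance II, uniqueness) Let A be a set with at least two elements, p : A × A → (0,1], and let ρ, ρ' : A → [0,1] satisfy: sup_{a∈A} ρ(a) = sup_{a∈A} ρ'(a) = 1; the sets {a ∈ A : ρ(a) ≥ ε} and {a ∈ A : ρ'(a) ≥ ε} are finite for every ε > 0; and both ρ and ρ' satisfy the max balance equations, i.e. for σ ∈ {ρ, ρ'} and every nontrivial partition {A',A''} of A (nonempty disjoint sets with union A), sup_{a∈A'} σ(a) · sup_{a''∈A''} p(a,a'') = sup_{a∈A''} σ(a) · sup_{a'∈A'} p(a,a'). Then ρ = ρ'. -/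

import Mathlib

open Set

noncomputable section

/-!
Comparison principle: let `σ` and `τ` be solutions, with `σ` nonnegative and bounded and `τ`
positive and vanishing at infinity. If `σ ≤ τ` at one point, then `σ ≤ τ` everywhere. Otherwise
cut `A` along `L = {σ ≤ τ}`. The flow out of `L` is at most as large for `σ` as for `τ`. On the
complement `τ < σ`, and since the flow of `τ` back into `L` is a positive maximum attained at some
point, it is strictly smaller than that of `σ`. The balance equations across the cut equate these
two pairs of flows, a contradiction. Applied in both directions at maximum points, the principle
gives uniqueness.
-/

section Suprema

open Filter Topology

variable {ι : Type*} {f : ι → ℝ} {s : Set ι}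

lemma le_biSup_of_bddAbove_image {i : ι} (hf : BddAbove (f '' s)) (hi : i ∈ s) :
    f i ≤ ⨆ j ∈ s, f j :=
  le_ciSup₂ (f := fun j (_ : j ∈ s) ↦ f j)
    (hf.mono <| iUnion_subset fun _ ↦ range_subset_iff.2 <| mem_image_of_mem f) i hi

lemma biSup_le_of_nonneg {c : ℝ} (hf : ∀ i ∈ s, f i ≤ c) (hc : 0 ≤ c) : ⨆ i ∈ s, f i ≤ c :=
  Real.iSup_le (fun i ↦ Real.iSup_le (hf i) hc) hc

lemma tendsto_cofinite_zero_of_finite_superlevel (h0 : ∀ i, 0 ≤ f i)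
    (hfin : ∀ ε : ℝ, 0 < ε → {i | ε ≤ f i}.Finite) : Tendsto f cofinite (𝓝 0) := by
  refine tendsto_order.2 ⟨fun c hc ↦ .of_forall fun i ↦ hc.trans_le (h0 i), fun ε hε ↦ ?_⟩
  simpa only [eventually_cofinite, not_lt] using hfin ε hε

lemma exists_isMaxOn_of_tendsto_cofinite_zero (hf : Tendsto f cofinite (𝓝 0)) {i : ι} (hi : i ∈ s)
    (hpos : 0 < f i) : ∃ j ∈ s, IsMaxOn f s j := by
  have hfin : {j | f i ≤ f j}.Finite := by
    simpa only [eventually_cofinite, not_lt] using hf.eventually_lt_const hpos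
  obtain ⟨j, ⟨hij, hj⟩, hmax⟩ :=
    exists_max_image ({j | f i ≤ f j} ∩ s) f (hfin.inter_of_left s) ⟨i, le_refl (f i), hi⟩
  refine ⟨j, hj, fun k hk ↦ ?_⟩
  rcases le_total (f i) (f k) with hik | hki
  · exact hmax k ⟨hik, hk⟩
  · exact hki.trans hij

lemma exists_eq_biSup_of_tendsto_cofinite_zero (hf : Tendsto f cofinite (𝓝 0))
    (hpos : 0 < ⨆ i ∈ s, f i) : ∃ j ∈ s, f j = ⨆ i ∈ s, f i := by
  obtain ⟨i, hi, hfi⟩ : ∃ i ∈ s, 0 < f i := by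
    by_contra! hle
    exact hpos.not_ge (biSup_le_of_nonneg hle le_rfl)
  obtain ⟨j, hj, hmax⟩ := exists_isMaxOn_of_tendsto_cofinite_zero hf hi hfi
  exact ⟨j, hj, (le_biSup_of_bddAbove_image hmax.bddAbove hj).antisymm
    (biSup_le_of_nonneg hmax (hfi.le.trans (hmax hi)))⟩

lemma exists_eq_of_isLUB_range_of_tendsto_cofinite_zero (hf : Tendsto f cofinite (𝓝 0)) {r : ℝ}
    (hr : 0 < r) (hlub : IsLUB (range f) r) : ∃ j, f j = r := by
  obtain ⟨_, ⟨i, rfl⟩, hi, -⟩ := hlub.exists_between hr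
  obtain ⟨j, -, hmax⟩ := exists_isMaxOn_of_tendsto_cofinite_zero hf (mem_univ i) hi
  have hgreatest : IsGreatest (range f) (f j) :=
    ⟨mem_range_self j, forall_mem_range.2 fun k ↦ hmax (mem_univ k)⟩
  exact ⟨j, hgreatest.isLUB.unique hlub⟩

-- Real suprema over empty or unbounded families are `0`, so a nonzero value is a genuine supremum.
lemma isLUB_range_of_iSup_eq {r : ℝ} (h : ⨆ i, f i = r) (hr : r ≠ 0) : IsLUB (range f) r := by
  subst h
  have : Nonempty ι := not_isEmpty_iff.1 fun _ ↦ hr (Real.iSup_of_isEmpty f)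
  exact isLUB_ciSup (not_imp_comm.1 Real.iSup_of_not_bddAbove hr)

end Suprema

lemma exists_pos_of_isIrreducible {n R : Type*} [Ring R] [LinearOrder R] {M : Matrix n n R}
    (hM : M.IsIrreducible) {X : Set n} (hX : X.Nonempty) (hXc : Xᶜ.Nonempty) :
    ∃ a ∈ X, ∃ b ∈ Xᶜ, 0 < M a b := by
  by_contra! hcut
  let : Quiver n := M.toQuiver
  have mem_of_path {a b : n} (ha : a ∈ X) (path : Quiver.Path a b) : b ∈ X := by
    induction path with
    | nil => exact ha
    | cons _ edge hb =>
      by_contra hc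
      exact (hcut _ hb _ hc).not_gt edge.down
  obtain ⟨a, ha⟩ := hX
  obtain ⟨b, hb⟩ := hXc
  obtain ⟨path, -⟩ := hM.connected a b
  exact hb (mem_of_path ha path)

lemma isIrreducible_of_forall_pos {n R : Type*} [Ring R] [LinearOrder R] {M : Matrix n n R}
    (hM : ∀ a b, 0 < M a b) : M.IsIrreducible where
  nonneg a b := (hM a b).le
  connected a b := by
    let : Quiver n := M.toQuiver
    have edge : a ⟶ b := ⟨hM a b⟩
    exact ⟨edge.toPath, Nat.one_pos⟩

section MaxBalance

open Filter Topology

variable {A : Type*} {p : Matrix A A ℝ} {C : ℝ} {σ τ : A → ℝ} {X Y : Set A} {a b : A}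

/-- The largest weight `p(a, Y)` of a transition from the point `a` into the set `Y`, equal to `0`
when `Y` is empty. -/
def maxWeight (p : Matrix A A ℝ) (a : A) (Y : Set A) : ℝ :=
  ⨆ b ∈ Y, p a b

/-- The max-times flow from `X` to `Y` under `σ`, the quantity compared in the max balance
equations. As a real supremum it is meaningful for bounded nonnegative `p` and `σ`. -/
def maxFlow (p : Matrix A A ℝ) (σ : A → ℝ) (X Y : Set A) : ℝ :=
  ⨆ a ∈ X, σ a * maxWeight p a Y

/-- The max balance equations for `σ`: the flows in both directions across every nontrivial cut
agree. A partition of `A` into two parts is encoded as a set and its complement. -/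
def IsMaxBalanced (p : Matrix A A ℝ) (σ : A → ℝ) : Prop :=
  ∀ X : Set A, X.Nonempty → Xᶜ.Nonempty → maxFlow p σ X Xᶜ = maxFlow p σ Xᶜ X

lemma isMaxBalanced_of_forall_partition
    (h : ∀ X Y : Set A, X.Nonempty → Y.Nonempty → Disjoint X Y → X ∪ Y = univ →
      maxFlow p σ X Y = maxFlow p σ Y X) : IsMaxBalanced p σ :=
  fun X hX hXc ↦ h X Xᶜ hX hXc disjoint_compl_right (union_compl_self X)

lemma maxWeight_nonneg (hp : ∀ a b, 0 ≤ p a b) : 0 ≤ maxWeight p a Y :=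
  Real.iSup_nonneg fun b ↦ Real.iSup_nonneg fun _ ↦ hp a b

lemma maxWeight_le (hp : ∀ a b, 0 ≤ p a b) (hC : ∀ a b, p a b ≤ C) : maxWeight p a Y ≤ C :=
  biSup_le_of_nonneg (fun b _ ↦ hC a b) ((hp a a).trans (hC a a))

lemma le_maxWeight (hC : ∀ a b, p a b ≤ C) (hb : b ∈ Y) : p a b ≤ maxWeight p a Y :=
  le_biSup_of_bddAbove_image ⟨C, forall_mem_image.2 fun b _ ↦ hC a b⟩ hb

lemma maxFlow_nonneg (hp : ∀ a b, 0 ≤ p a b) (hσ : ∀ a, 0 ≤ σ a) : 0 ≤ maxFlow p σ X Y :=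
  Real.iSup_nonneg fun a ↦ Real.iSup_nonneg fun _ ↦ mul_nonneg (hσ a) (maxWeight_nonneg hp)

lemma mul_maxWeight_le_maxFlow (hp : ∀ a b, 0 ≤ p a b) (hC : ∀ a b, p a b ≤ C)
    (hσ : ∀ a, 0 ≤ σ a) (hσB : BddAbove (range σ)) (ha : a ∈ X) :
    σ a * maxWeight p a Y ≤ maxFlow p σ X Y := by
  obtain ⟨B, hB⟩ := hσB
  refine le_biSup_of_bddAbove_image (f := fun a ↦ σ a * maxWeight p a Y)
    ⟨B * C, forall_mem_image.2 fun x _ ↦ ?_⟩ ha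
  have hx : σ x ≤ B := hB (mem_range_self x)
  exact mul_le_mul hx (maxWeight_le hp hC) (maxWeight_nonneg hp) ((hσ x).trans hx)

lemma maxFlow_pos (hp : ∀ a b, 0 ≤ p a b) (hC : ∀ a b, p a b ≤ C) (hσ : ∀ a, 0 ≤ σ a)
    (hσB : BddAbove (range σ)) (ha : a ∈ X) (hb : b ∈ Y) (hσa : 0 < σ a) (hab : 0 < p a b) :
    0 < maxFlow p σ X Y :=
  (mul_pos hσa (hab.trans_le (le_maxWeight hC hb))).trans_le
    (mul_maxWeight_le_maxFlow hp hC hσ hσB ha)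

lemma maxFlow_mono (hp : ∀ a b, 0 ≤ p a b) (hC : ∀ a b, p a b ≤ C) (hτ : ∀ a, 0 ≤ τ a)
    (hτB : BddAbove (range τ)) (hle : ∀ a ∈ X, σ a ≤ τ a) :
    maxFlow p σ X Y ≤ maxFlow p τ X Y :=
  biSup_le_of_nonneg
    (fun a ha ↦ (mul_le_mul_of_nonneg_right (hle a ha) (maxWeight_nonneg hp)).trans
      (mul_maxWeight_le_maxFlow hp hC hτ hτB ha))
    (maxFlow_nonneg hp hτ)

lemma exists_eq_maxFlow (hp : ∀ a b, 0 ≤ p a b) (hC : ∀ a b, p a b ≤ C)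
    (hτ : Tendsto τ cofinite (𝓝 0)) (hpos : 0 < maxFlow p τ X Y) :
    ∃ a ∈ X, τ a * maxWeight p a Y = maxFlow p τ X Y := by
  have hbound (a : A) : |maxWeight p a Y| ≤ C :=
    (abs_of_nonneg (maxWeight_nonneg hp)).trans_le (maxWeight_le hp hC)
  have hflow : Tendsto (fun a ↦ τ a * maxWeight p a Y) cofinite (𝓝 0) := by
    simpa only [mul_comm] using bdd_le_mul_tendsto_zero' C (.of_forall hbound) hτ
  exact exists_eq_biSup_of_tendsto_cofinite_zero hflow hpos

lemma maxFlow_lt_maxFlow (hp : ∀ a b, 0 ≤ p a b) (hC : ∀ a b, p a b ≤ C) (hσ : ∀ a, 0 ≤ σ a)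
    (hσB : BddAbove (range σ)) (hτ : Tendsto τ cofinite (𝓝 0)) (hlt : ∀ a ∈ X, τ a < σ a)
    (hpos : 0 < maxFlow p τ X Y) : maxFlow p τ X Y < maxFlow p σ X Y := by
  obtain ⟨a, ha, hmax⟩ := exists_eq_maxFlow hp hC hτ hpos
  have hweight : 0 < maxWeight p a Y :=
    (maxWeight_nonneg hp).lt_of_ne' (right_ne_zero_of_mul (hmax.trans_ne hpos.ne'))
  calc maxFlow p τ X Y = τ a * maxWeight p a Y := hmax.symm
    _ < σ a * maxWeight p a Y := mul_lt_mul_of_pos_right (hlt a ha) hweight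
    _ ≤ maxFlow p σ X Y := mul_maxWeight_le_maxFlow hp hC hσ hσB ha

lemma IsMaxBalanced.pos (hbal : IsMaxBalanced p σ) (hp : p.IsIrreducible)
    (hC : ∀ a b, p a b ≤ C) (hσ : ∀ a, 0 ≤ σ a) (hσB : BddAbove (range σ)) (hb : 0 < σ b) (a : A) :
    0 < σ a := by
  by_contra ha
  let S : Set A := {x | 0 < σ x}
  have hS : S.Nonempty := ⟨b, hb⟩
  have hSc : Sᶜ.Nonempty := ⟨a, ha⟩
  obtain ⟨x, hx, y, hy, hxy⟩ := exists_pos_of_isIrreducible hp hS hSc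
  have hout : 0 < maxFlow p σ S Sᶜ := maxFlow_pos hp.nonneg hC hσ hσB hx hy hx hxy
  have hin : maxFlow p σ Sᶜ S ≤ 0 := biSup_le_of_nonneg
    (fun x hx ↦ mul_nonpos_of_nonpos_of_nonneg (not_lt.1 hx) (maxWeight_nonneg hp.nonneg)) le_rfl
  exact (hout.trans_eq (hbal S hS hSc)).not_ge hin

theorem IsMaxBalanced.le_of_apply_le (hσbal : IsMaxBalanced p σ) (hτbal : IsMaxBalanced p τ)
    (hp : p.IsIrreducible) (hC : ∀ a b, p a b ≤ C) (hσ : ∀ a, 0 ≤ σ a) (hσB : BddAbove (range σ))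
    (hτ : ∀ a, 0 < τ a) (hτ0 : Tendsto τ cofinite (𝓝 0)) (hb : σ b ≤ τ b) : σ ≤ τ := by
  have hτ' (a : A) : 0 ≤ τ a := (hτ a).le
  have hτB : BddAbove (range τ) := hτ0.bddAbove_range_of_cofinite
  by_contra hle
  let L : Set A := {a | σ a ≤ τ a}
  have hL : L.Nonempty := ⟨b, hb⟩
  have hLc : Lᶜ.Nonempty := not_forall.1 hle
  obtain ⟨x, hx, y, hy, hxy⟩ := exists_pos_of_isIrreducible hp hL hLc
  have hpos : 0 < maxFlow p τ Lᶜ L :=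
    (maxFlow_pos hp.nonneg hC hτ' hτB hx hy (hτ x) hxy).trans_eq (hτbal L hL hLc)
  refine lt_irrefl (maxFlow p τ Lᶜ L) ?_
  calc maxFlow p τ Lᶜ L
    _ < maxFlow p σ Lᶜ L :=
      maxFlow_lt_maxFlow hp.nonneg hC hσ hσB hτ0 (fun _ ha ↦ not_le.1 ha) hpos
    _ = maxFlow p σ L Lᶜ := (hσbal L hL hLc).symm
    _ ≤ maxFlow p τ L Lᶜ := maxFlow_mono hp.nonneg hC hτ' hτB fun _ ha ↦ ha
    _ = maxFlow p τ Lᶜ L := hτbal L hL hLc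

theorem stmt15_general (hp : p.IsIrreducible) (hC : ∀ a b, p a b ≤ C)
    (hσ : ∀ a, 0 ≤ σ a) (hτ : ∀ a, 0 ≤ τ a)
    (hσ1 : IsLUB (range σ) 1) (hτ1 : IsLUB (range τ) 1) (hτ0 : Tendsto τ cofinite (𝓝 0))
    (hσbal : IsMaxBalanced p σ) (hτbal : IsMaxBalanced p τ) : σ = τ := by
  have hσB : BddAbove (range σ) := hσ1.bddAbove
  have hτB : BddAbove (range τ) := hτ1.bddAbove
  obtain ⟨b, hb⟩ := exists_eq_of_isLUB_range_of_tendsto_cofinite_zero hτ0 one_pos hτ1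
  have hστ : σ ≤ τ :=
    hσbal.le_of_apply_le hτbal hp hC hσ hσB (hτbal.pos hp hC hτ hτB (hb ▸ one_pos)) hτ0
      ((hσ1.1 (mem_range_self b)).trans_eq hb.symm)
  have hσ0 : Tendsto σ cofinite (𝓝 0) := squeeze_zero hσ hστ hτ0
  obtain ⟨c, hc⟩ := exists_eq_of_isLUB_range_of_tendsto_cofinite_zero hσ0 one_pos hσ1
  have hτσ : τ ≤ σ :=
    hτbal.le_of_apply_le hσbal hp hC hτ hτB (hσbal.pos hp hC hσ hσB (hc ▸ one_pos)) hσ0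
      ((hτ1.1 (mem_range_self c)).trans_eq hc.symm)
  exact hστ.antisymm hτσ

end MaxBalance

theorem stmt15 {A : Type*} [Nontrivial A] (p : A → A → ℝ)
    (hp : ∀ a b, p a b ∈ Set.Ioc (0:ℝ) 1)
    (ρ ρ' : A → ℝ)
    (hρ01 : ∀ a, ρ a ∈ Set.Icc (0:ℝ) 1) (hρ'01 : ∀ a, ρ' a ∈ Set.Icc (0:ℝ) 1)
    (hρ1 : (⨆ a, ρ a) = 1) (hρ'1 : (⨆ a, ρ' a) = 1)
    (hfin : ∀ ε : ℝ, 0 < ε → {a | ε ≤ ρ a}.Finite)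
    (hfin' : ∀ ε : ℝ, 0 < ε → {a | ε ≤ ρ' a}.Finite)
    (hbal : ∀ σ ∈ ({ρ, ρ'} : Set (A → ℝ)), ∀ A' A'' : Set A,
      A'.Nonempty → A''.Nonempty → Disjoint A' A'' → A' ∪ A'' = Set.univ →
      (⨆ a ∈ A', σ a * ⨆ b ∈ A'', p a b) = ⨆ a ∈ A'', σ a * ⨆ b ∈ A', p a b) :
    ρ = ρ' := by
  exact stmt15_general (p := .of p) (isIrreducible_of_forall_pos fun a b ↦ (hp a b).1)
    (fun a b ↦ (hp a b).2) (fun a ↦ (hρ01 a).1) (fun a ↦ (hρ'01 a).1)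
    (isLUB_range_of_iSup_eq hρ1 one_ne_zero) (isLUB_range_of_iSup_eq hρ'1 one_ne_zero)
    (tendsto_cofinite_zero_of_finite_superlevel (fun a ↦ (hρ'01 a).1) hfin')
    (isMaxBalanced_of_forall_partition (hbal ρ (mem_insert _ _)))
    (isMaxBalanced_of_forall_partition (hbal ρ' (mem_insert_of_mem _ rfl)))
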